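/- Let Ω ⊂ ℝ² be a bounded, open, connected set with Lipschitz boundary, and let Λ be the functional on Lip₀(Ω) given by Λ(φ) := Σ_{i=1}^∞ (φ(x_i) − φ(y_i)), where x_i, y_i ∈ cl(Ω), x_i ≠ y_i, for each i at least one of x_i, y_i lies in Ω, and Σ_{i=1}^∞ |x_i − y_i| = Σ_{i=1}^∞ d̄_Ω(x_i,y_i) < +∞. Then ‖Λ‖_{flat,α} equals the infimum of |R|(Ω) + 2 Σ_k H¹([a_k,b_k] ∩ Ω) over all m ∈ ℕ, signs σ_1,…,σ_m ∈ {−1,+1}, points z_1,…,z_m ∈ ℝ², and countable families of pairs (a_k,b_k) of points of ℝ² with Σ_k |b_k − a_k| < +∞, such that Σ_{i=1}^∞ (φ(x_i) − φ(y_i)) = Σ_{i=1}^m σ_i φ(z_i) + Σ_k (φ(b_k) − φ(a_k)) for every φ ∈ C_c^∞(ℝ²); here R := Σ_{i=1}^m σ_i δ_{z_i} is regarded as an atomic signed measure and |R|(Ω) is its total variation on Ω. -/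

import Mathlib

open MeasureTheory Metric Filter Set
open scoped ENNReal NNReal Topology Classical

noncomputable section

abbrev R2 := EuclideanSpace ℝ (Fin 2)

/-- `Ω ⊂ ℝ²` has Lipschitz boundary: near every boundary point, after a rigid motion,
`Ω` coincides with the open region strictly above the graph of a Lipschitz function. -/
def HasLipschitzBoundary (Ω : Set R2) : Prop :=
  ∀ p ∈ frontier Ω, ∃ r : ℝ, 0 < r ∧ ∃ (f : R2 ≃ᵢ R2) (γ : ℝ → ℝ) (L : ℝ≥0),
    LipschitzWith L γ ∧ ∀ x ∈ Metric.ball p r, (x ∈ Ω ↔ γ (f x 0) < f x 1)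

/-- `G` is the weak (distributional) gradient of `u` on `Ω`:
`∫_Ω u_i ∂_j φ = -∫_Ω G_{ij} φ` for all test functions `φ ∈ C_c^∞(Ω)`. -/
def IsWeakGradient (Ω : Set R2) (u : R2 → R2) (G : R2 → Matrix (Fin 2) (Fin 2) ℝ) : Prop :=
  ∀ φ : R2 → ℝ, ContDiff ℝ (⊤ : ℕ∞) φ → HasCompactSupport φ → tsupport φ ⊆ Ω →
    ∀ i j : Fin 2,
      (∫ x in Ω, u x i * fderiv ℝ φ x (EuclideanSpace.single j 1)) =
        - ∫ x in Ω, G x i j * φ x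

/-- `u ∈ W^{1,1}(Ω;ℝ²)` with weak gradient `G`. -/
def MemW11 (Ω : Set R2) (u : R2 → R2) (G : R2 → Matrix (Fin 2) (Fin 2) ℝ) : Prop :=
  IntegrableOn u Ω ∧ (∀ i j : Fin 2, IntegrableOn (fun x => G x i j) Ω) ∧
    IsWeakGradient Ω u G

/-- `|u| = 1` a.e. in `Ω`. -/
def SphereValued (Ω : Set R2) (u : R2 → R2) : Prop :=
  ∀ᵐ x ∂(volume.restrict Ω), ‖u x‖ = 1

/-- Frobenius norm of a `2×2` matrix. -/
def frob (M : Matrix (Fin 2) (Fin 2) ℝ) : ℝ :=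
  Real.sqrt (∑ i, ∑ j, (M i j) ^ 2)

/-- Jacobian matrix of a map `v : ℝ² → ℝ²`. -/
def jacobianMatrix (v : R2 → R2) (x : R2) : Matrix (Fin 2) (Fin 2) ℝ :=
  Matrix.of fun i j => fderiv ℝ v x (EuclideanSpace.single j 1) i

/-- Classical graph area `A(v,A) = ∫_A √(1 + |∇v|² + (Jv)²)` of a `C¹` map. -/
def classicalArea (A : Set R2) (v : R2 → R2) : ℝ≥0∞ :=
  ∫⁻ x in A, ENNReal.ofReal
    (Real.sqrt (1 + (∑ i, ∑ j, (jacobianMatrix v x i j) ^ 2) + (jacobianMatrix v x).det ^ 2))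

/-- `L¹`-relaxed area functional `𝒜(u,A)`. -/
def relaxedArea (u : R2 → R2) (A : Set R2) : ℝ≥0∞ :=
  sInf { a : ℝ≥0∞ | ∃ v : ℕ → R2 → R2,
    (∀ k, ContDiffOn ℝ 1 (v k) A) ∧
    (∀ k, IntegrableOn (fun x => v k x - u x) A) ∧
    Tendsto (fun k => ∫ x in A, ‖v k x - u x‖) atTop (nhds 0) ∧
    a = Filter.liminf (fun k => classicalArea A (v k)) atTop }

/-- `λ_u = (1/2)(u₁ ∇^⊥u₂ − u₂ ∇^⊥u₁)`, computed from the weak gradient `G`. -/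
def lambdaVec (u : R2 → R2) (G : R2 → Matrix (Fin 2) (Fin 2) ℝ) (x : R2) : Fin 2 → ℝ :=
  ![ (1 / 2) * (-(u x 0) * G x 1 1 + u x 1 * G x 0 1),
     (1 / 2) * (u x 0 * G x 1 0 - u x 1 * G x 0 0) ]

/-- Distributional Jacobian pairing `⟨Det(∇u), φ⟩ = ∫_Ω λ_u · ∇φ`. -/
def detPairing (Ω : Set R2) (u : R2 → R2) (G : R2 → Matrix (Fin 2) (Fin 2) ℝ)
    (φ : R2 → ℝ) : ℝ :=
  ∫ x in Ω, ∑ j, lambdaVec u G x j * fderiv ℝ φ x (EuclideanSpace.single j 1)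

/-- `φ ∈ Lip₀(Ω)`: Lipschitz on `cl(Ω)` and vanishing on `∂Ω`. -/
def MemLip0 (Ω : Set R2) (φ : R2 → ℝ) : Prop :=
  (∃ L : ℝ≥0, LipschitzOnWith L φ (closure Ω)) ∧ ∀ p ∈ frontier Ω, φ p = 0

/-- Admissible test functions for the flat norm: Lipschitz constant `≤ L` on `cl(Ω)`,
vanishing on `Z`, and bounded by `1` on `cl(Ω)`. -/
def FlatAdmissible (Ω Z : Set R2) (L : ℝ≥0) (φ : R2 → ℝ) : Prop :=
  LipschitzOnWith L φ (closure Ω) ∧ (∀ p ∈ Z, φ p = 0) ∧ ∀ p ∈ closure Ω, |φ p| ≤ 1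

/-- Flat norm of a functional `F`, with vanishing condition on the set `Z`. -/
def flatNormOn (Ω Z : Set R2) (L : ℝ≥0) (F : (R2 → ℝ) → ℝ) : ℝ≥0∞ :=
  ⨆ φ ∈ {φ : R2 → ℝ | FlatAdmissible Ω Z L φ}, ENNReal.ofReal (F φ)

/-- Flat norm of a functional `F` on `Lip₀(Ω)`; `L = 2` gives `‖·‖_{flat,α}` (α = 1/2),
`L = 1` gives `‖·‖_flat`. -/
def flatNorm (Ω : Set R2) (L : ℝ≥0) (F : (R2 → ℝ) → ℝ) : ℝ≥0∞ :=
  flatNormOn Ω (frontier Ω) L F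

/-- `d̄_Ω(x,y) = min{|x−y|, dist(x,∂Ω) + dist(y,∂Ω)}`. -/
def dbar (Ω : Set R2) (x y : R2) : ℝ :=
  min (dist x y) (Metric.infDist x (frontier Ω) + Metric.infDist y (frontier Ω))

/-- Countably subadditive interior envelope `𝒜**(u,V)` (relative to `Ω`). -/
def envA (u : R2 → R2) (Ω V : Set R2) : ℝ≥0∞ :=
  sInf { a : ℝ≥0∞ | ∃ A : ℕ → Set R2,
    (∀ k, IsOpen (A k) ∧ A k ⊆ Ω) ∧ V ⊆ ⋃ k, A k ∧ a = ∑' k, relaxedArea u (A k) }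

/-- Property `(P_f)` for a finite family of pairs of points of `cl(Ω)`. -/
def SatisfiesPf (Ω : Set R2) {n : ℕ} (x y : Fin n → R2) : Prop :=
  (∀ k, (x k ∈ Ω ∧ y k ∈ frontier Ω ∧ dist (x k) (y k) = Metric.infDist (x k) (frontier Ω)) ∨
        (y k ∈ Ω ∧ x k ∈ frontier Ω ∧ dist (x k) (y k) = Metric.infDist (y k) (frontier Ω))) ∧
  ∀ i j, x i ∈ Ω → y j ∈ Ω → x i ≠ y j

/-- The points of the family `x, y` lying in `Ω` are distinct and three by three
not collinear. -/
def InteriorPointsGeneric (Ω : Set R2) {n : ℕ} (x y : Fin n → R2) : Prop :=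
  (∀ a b : Fin n ⊕ Fin n, Sum.elim x y a ∈ Ω → Sum.elim x y b ∈ Ω → a ≠ b →
    Sum.elim x y a ≠ Sum.elim x y b) ∧
  ∀ a b c : Fin n ⊕ Fin n, Sum.elim x y a ∈ Ω → Sum.elim x y b ∈ Ω → Sum.elim x y c ∈ Ω →
    a ≠ b → a ≠ c → b ≠ c →
    ¬ Collinear ℝ ({Sum.elim x y a, Sum.elim x y b, Sum.elim x y c} : Set R2)

/-- `ι(w₁,w₂) = (w₁,−w₂)`. -/
def conjPt (w : R2) : R2 := (WithLp.equiv 2 (Fin 2 → ℝ)).symm ![w 0, -(w 1)]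

/-- `u` is a (positive/negative) vortex around the points of the family lying in `Ω`:
the closed discs of radii `ρ` are contained in `Ω` and pairwise disjoint,
`u(z) = (z−x_i)/|z−x_i|` on `B_{ρ}(x_i)` and `u(z) = ι((z−y_j)/|z−y_j|)` on `B_{ρ}(y_j)`. -/
def VortexAt (Ω : Set R2) (u : R2 → R2) {n : ℕ} (x y : Fin n → R2)
    (ρ : Fin n ⊕ Fin n → ℝ) : Prop :=
  (∀ a, Sum.elim x y a ∈ Ω → Metric.closedBall (Sum.elim x y a) (ρ a) ⊆ Ω) ∧
  (∀ a b, a ≠ b → Sum.elim x y a ∈ Ω → Sum.elim x y b ∈ Ω →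
    Disjoint (Metric.closedBall (Sum.elim x y a) (ρ a))
      (Metric.closedBall (Sum.elim x y b) (ρ b))) ∧
  (∀ i, x i ∈ Ω → ∀ᵐ z ∂(volume.restrict (Metric.ball (x i) (ρ (Sum.inl i)))),
    u z = ‖z - x i‖⁻¹ • (z - x i)) ∧
  (∀ i, y i ∈ Ω → ∀ᵐ z ∂(volume.restrict (Metric.ball (y i) (ρ (Sum.inr i)))),
    u z = conjPt (‖z - y i‖⁻¹ • (z - y i)))

/-- The energy `E(I_P, I_D, τ)` of a partition `{I_Dᶜ, I_D}` of `I` and an injection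
`τ : I_D → I`. -/
def energy (Ω : Set R2) {n : ℕ} (x y : Fin n → R2) (ID : Finset (Fin n))
    (τ : Fin n → Fin n) : ℝ≥0∞ :=
  ((IDᶜ.filter fun k => x k ∈ Ω).card : ℝ≥0∞) +
  (((Finset.univ \ ID.image τ).filter fun j => y j ∈ Ω).card : ℝ≥0∞) +
  2 * ∑ k ∈ ID, μH[1] (segment ℝ (y (τ k)) (x k) ∩ Ω)

/-
Weak duality: an admissible `f`, extended by zero, is a limit of functions in `C_c^∞` with the same
Lipschitz constant `L`, so it may be tested against any decomposition `Λ = R + ∂S`. The atoms then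
contribute at most `|R|(Ω)`, and a segment `[a, b]` at most `L H¹([a, b] ∩ Ω)`, because the
image of `[a, b] ∩ Ω` under `f` covers the interval between `f a` and `f b`, up to the value `0`.

Strong duality: for finitely many dipoles this is optimal transport for the cost
`d(p, q) = min {L |p - q|, c(p) + c(q)}`, where `c(p) = min {1, L dist(p, Ωᶜ)}`. At a maximal
Kantorovich potential the saturated pairs satisfy Hall's marriage condition, hence contain a perfect
matching, and each matched dipole decomposes at cost `d`. Normalised to vanish at a point off `Ω`,
the potential is admissible. The tail of an infinite sum is paid for by its own segments.
-/

section Duality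

variable {X : Type*} {D : X → X → ℝ}

/-- A Kantorovich potential for a (possibly asymmetric) cost `D`: a function that is `1`-Lipschitz
with respect to `D`. -/
def IsPotential (D : X → X → ℝ) (φ : X → ℝ) : Prop :=
  ∀ p q, φ p - φ q ≤ D p q

theorem isClosed_setOf_isPotential (D : X → X → ℝ) : IsClosed {φ | IsPotential D φ} := by
  have hclosed (p q : X) : IsClosed {φ : X → ℝ | φ p - φ q ≤ D p q} :=
    isClosed_le (by fun_prop) continuous_const
  simpa only [IsPotential, Set.ofPred_forall] using
    isClosed_iInter fun p => isClosed_iInter (hclosed p)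

theorem isCompact_setOf_isPotential_eq_zero (D : X → X → ℝ) (p₀ : X) :
    IsCompact {φ | IsPotential D φ ∧ φ p₀ = 0} := by
  have hbox : IsCompact (univ.pi fun p => Icc (-D p₀ p) (D p p₀)) :=
    isCompact_univ_pi fun _ => isCompact_Icc
  refine hbox.of_isClosed_subset ((isClosed_setOf_isPotential D).inter ?_) ?_
  · exact isClosed_eq (continuous_apply p₀) continuous_const
  · rintro φ ⟨hφ, h₀⟩ p -
    constructor
    · linarith [hφ p₀ p]
    · linarith [hφ p p₀]

variable {ι : Type*} [Fintype ι]

theorem exists_isPotential_forall_sum_le (hself : ∀ p, D p p = 0)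
    (htri : ∀ p q r, D p r ≤ D p q + D q r) (x y : ι → X) (p₀ : X) :
    ∃ φ, IsPotential D φ ∧ φ p₀ = 0 ∧
      ∀ ψ, IsPotential D ψ → ψ p₀ = 0 → ∑ i, (ψ (x i) - ψ (y i)) ≤ ∑ i, (φ (x i) - φ (y i)) := by
  have hne : {φ | IsPotential D φ ∧ φ p₀ = 0}.Nonempty :=
    ⟨fun p => D p p₀, fun p q => sub_le_iff_le_add.2 (htri p q p₀), hself p₀⟩
  have hcont : Continuous fun φ : X → ℝ => ∑ i, (φ (x i) - φ (y i)) := by fun_prop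
  obtain ⟨φ, ⟨hφ, h₀⟩, hmax⟩ :=
    (isCompact_setOf_isPotential_eq_zero D p₀).exists_isMaxOn hne hcont.continuousOn
  exact ⟨φ, hφ, h₀, fun ψ hψ hψ₀ => hmax ⟨hψ, hψ₀⟩⟩

-- The `c`-transform of `v` dominates every `u` that is feasible together with `v`.
theorem exists_isPotential_sum_sub_le [Nonempty ι] (hself : ∀ p, D p p = 0)
    (htri : ∀ p q r, D p r ≤ D p q + D q r) {x y : ι → X} {u v : ι → ℝ}
    (huv : ∀ i j, u i - v j ≤ D (x i) (y j)) (p₀ : X) :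
    ∃ φ, IsPotential D φ ∧ φ p₀ = 0 ∧ ∑ i, (u i - v i) ≤ ∑ i, (φ (x i) - φ (y i)) := by
  set ψ : X → ℝ := fun p => ⨅ j, (v j + D p (y j))
  have hψ_le (p : X) (j : ι) : ψ p ≤ v j + D p (y j) := ciInf_le (Finite.bddBelow_range _) j
  have hψ_pot : IsPotential D ψ := fun p q => by
    rw [sub_le_comm]
    exact le_ciInf fun j => by linarith [hψ_le p j, htri p q (y j)]
  have hu (i : ι) : u i ≤ ψ (x i) := le_ciInf fun j => by linarith [huv i j]
  have hv (j : ι) : ψ (y j) ≤ v j := by simpa only [hself, add_zero] using hψ_le (y j) j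
  refine ⟨fun p => ψ p - ψ p₀, fun p q => by simpa only [sub_sub_sub_cancel_right] using hψ_pot p q,
    sub_self _, Finset.sum_le_sum fun i _ => ?_⟩
  linarith [hu i, hv i]

/-- The neighbors `j` of `i` in the bipartite graph of the pairs at which the constraint
`φ (xᵢ) - φ (yⱼ) ≤ D (xᵢ) (yⱼ)` is saturated. -/
def tightNeighbors (D : X → X → ℝ) (φ : X → ℝ) (x y : ι → X) (i : ι) : Finset ι :=
  {j | φ (x i) - φ (y j) = D (x i) (y j)}

theorem exists_pos_forall_add_le_of_ne {κ : Type*} [Finite κ] {f g : κ → ℝ}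
    (h : ∀ k, f k ≤ g k) : ∃ ε > 0, ∀ k, f k ≠ g k → f k + ε ≤ g k := by
  have hev : ∀ᶠ ε in 𝓝[>] (0 : ℝ), ∀ k, f k ≠ g k → f k + ε ≤ g k := by
    refine (eventually_all.2 fun k => ?_).filter_mono nhdsWithin_le_nhds
    by_cases hk : f k = g k
    · exact Eventually.of_forall fun ε hne => absurd hk hne
    · filter_upwards [Iio_mem_nhds (sub_pos.2 ((h k).lt_of_ne hk))] with ε hε _
      linarith [mem_Iio.1 hε]
  exact ((eventually_mem_nhdsWithin (s := Ioi (0 : ℝ))).and hev).exists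

-- Otherwise raising `φ (x i)` for `i ∈ s` and `φ (y j)` for the tight neighbors `j` of `s` by a
-- small `ε` would stay feasible and increase the dual functional.
theorem card_le_card_biUnion_tightNeighbors (hself : ∀ p, D p p = 0)
    (htri : ∀ p q r, D p r ≤ D p q + D q r) {x y : ι → X} {p₀ : X} {φ : X → ℝ}
    (hφ : IsPotential D φ)
    (hmax : ∀ ψ, IsPotential D ψ → ψ p₀ = 0 →
      ∑ i, (ψ (x i) - ψ (y i)) ≤ ∑ i, (φ (x i) - φ (y i))) (s : Finset ι) :
    s.card ≤ (s.biUnion (tightNeighbors D φ x y)).card := by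
  by_contra! hcard
  set N := s.biUnion (tightNeighbors D φ x y)
  obtain ⟨i₀, -⟩ : s.Nonempty := Finset.card_pos.1 (by omega)
  have : Nonempty ι := ⟨i₀⟩
  obtain ⟨ε, hε, hslack⟩ := exists_pos_forall_add_le_of_ne
    (f := fun k : ι × ι => φ (x k.1) - φ (y k.2)) (g := fun k => D (x k.1) (y k.2))
    fun k => hφ _ _
  set u : ι → ℝ := fun i => φ (x i) + if i ∈ s then ε else 0 with hu
  set v : ι → ℝ := fun j => φ (y j) + if j ∈ N then ε else 0 with hv
  have huv (i j : ι) : u i - v j ≤ D (x i) (y j) := by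
    have hij := hφ (x i) (y j)
    by_cases hi : i ∈ s
    · by_cases hj : j ∈ N
      · simpa only [hu, hv, hi, hj, if_true, add_sub_add_right_eq_sub] using hij
      · simp only [hu, hv, hi, hj, if_true, if_false, add_zero]
        rw [add_sub_right_comm]
        refine hslack (i, j) fun htight => hj ?_
        exact Finset.mem_biUnion.2 ⟨i, hi, Finset.mem_filter.2 ⟨Finset.mem_univ j, htight⟩⟩
    · simp only [hu, hv, hi, if_false, add_zero]
      split_ifs <;> linarith
  have hgain : ∑ i, (u i - v i) = ∑ i, (φ (x i) - φ (y i)) + ε * (s.card - N.card) := by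
    simp only [hu, hv, add_sub_add_comm, Finset.sum_add_distrib, Finset.sum_sub_distrib,
      Finset.sum_ite_mem, Finset.univ_inter, Finset.sum_const, nsmul_eq_mul]
    ring
  have hpos : 0 < ε * ((s.card : ℝ) - N.card) := mul_pos hε (sub_pos.2 (by exact_mod_cast hcard))
  obtain ⟨ψ, hψ, hψ₀, hle⟩ := exists_isPotential_sum_sub_le hself htri huv p₀
  linarith [hmax ψ hψ hψ₀]

theorem exists_isPotential_perm_eq {κ : Type*} [Finite κ] (hself : ∀ p, D p p = 0)
    (htri : ∀ p q r, D p r ≤ D p q + D q r) (x y : κ → X) (p₀ : X) :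
    ∃ φ, IsPotential D φ ∧ φ p₀ = 0 ∧
      ∃ τ : Equiv.Perm κ, ∀ k, φ (x k) - φ (y (τ k)) = D (x k) (y (τ k)) := by
  cases nonempty_fintype κ
  obtain ⟨φ, hφ, h₀, hmax⟩ := exists_isPotential_forall_sum_le hself htri x y p₀
  obtain ⟨τ, hτ, htight⟩ := (Finset.all_card_le_biUnion_card_iff_exists_injective _).1
    (card_le_card_biUnion_tightNeighbors hself htri hφ hmax)
  exact ⟨φ, hφ, h₀, Equiv.ofBijective τ (Finite.injective_iff_bijective.1 hτ),
    fun k => (Finset.mem_filter.1 (htight k)).2⟩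

end Duality

section FlatNorm

variable {E : Type*}

/-- The functional `∑ᵢ (δ_{xᵢ} - δ_{yᵢ})`. The sum takes the junk value `0` at those `φ` for which
it does not converge. -/
def dipoleSum {ι : Type*} (x y : ι → E) (φ : E → ℝ) : ℝ :=
  ∑' i, (φ (x i) - φ (y i))

/-- The dual flat norm of a functional on `Lip₀(Ω)`, with Lipschitz constant `L`. -/
def dualFlatNorm [PseudoMetricSpace E] (Ω : Set E) (L : ℝ≥0) (Λ : (E → ℝ) → ℝ) : ℝ≥0∞ :=
  ⨆ φ ∈ {φ : E → ℝ | LipschitzOnWith L φ (closure Ω) ∧ (∀ p ∈ frontier Ω, φ p = 0) ∧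
    ∀ p ∈ closure Ω, |φ p| ≤ 1}, ENNReal.ofReal (Λ φ)

/-- The test functions for the dual flat norm, extended by zero to the whole space. -/
structure IsFlatTest [PseudoMetricSpace E] (Ω : Set E) (L : ℝ≥0) (f : E → ℝ) : Prop where
  lipschitzWith : LipschitzWith L f
  eq_zero_of_notMem : ∀ p ∉ Ω, f p = 0
  abs_le_one : ∀ p, |f p| ≤ 1

theorem indicator_eqOn_closure [TopologicalSpace E] {Ω : Set E} {φ : E → ℝ}
    (h₀ : ∀ p ∈ frontier Ω, φ p = 0) : EqOn (Ω.indicator φ) φ (closure Ω) := by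
  intro p hp
  by_cases hpΩ : p ∈ Ω
  · exact indicator_of_mem hpΩ φ
  · rw [indicator_of_notMem hpΩ, h₀ p ⟨hp, fun h => hpΩ (interior_subset h)⟩]

variable [NormedAddCommGroup E] [NormedSpace ℝ E] {Ω : Set E} {L : ℝ≥0}

theorem lipschitzWith_indicator [FiniteDimensional ℝ E] {φ : E → ℝ}
    (hφ : LipschitzOnWith L φ (closure Ω)) (h₀ : ∀ p ∈ frontier Ω, φ p = 0) :
    LipschitzWith L (Ω.indicator φ) := by
  have hmixed {p q : E} (hp : p ∈ Ω) (hq : q ∉ Ω) : |φ p| ≤ L * dist p q := by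
    have hΩ : Ω ≠ univ := fun h => hq (h ▸ mem_univ q)
    obtain ⟨r, hrΩ, hr⟩ := exists_mem_frontier_infDist_compl_eq_dist hp hΩ
    calc |φ p| = dist (φ p) (φ r) := by rw [h₀ r hrΩ, Real.dist_0_eq_abs]
      _ ≤ L * dist p r := hφ.dist_le_mul p (subset_closure hp) r (frontier_subset_closure hrΩ)
      _ ≤ L * dist p q := by
        gcongr
        exact hr ▸ infDist_le_dist_of_mem hq
  refine LipschitzWith.of_dist_le_mul fun p q => ?_
  by_cases hp : p ∈ Ω <;> by_cases hq : q ∈ Ω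
  · simpa only [indicator_of_mem, hp, hq] using
      hφ.dist_le_mul p (subset_closure hp) q (subset_closure hq)
  · simpa only [indicator_of_mem hp, indicator_of_notMem hq, Real.dist_0_eq_abs] using hmixed hp hq
  · simpa only [indicator_of_mem hq, indicator_of_notMem hp, dist_comm, Real.dist_0_eq_abs]
      using hmixed hq hp
  · simp only [indicator_of_notMem hp, indicator_of_notMem hq, dist_self]
    positivity

theorem isFlatTest_indicator [FiniteDimensional ℝ E] {φ : E → ℝ}
    (hφ : LipschitzOnWith L φ (closure Ω)) (h₀ : ∀ p ∈ frontier Ω, φ p = 0)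
    (h₁ : ∀ p ∈ closure Ω, |φ p| ≤ 1) :
    IsFlatTest Ω L (Ω.indicator φ) where
  lipschitzWith := lipschitzWith_indicator hφ h₀
  eq_zero_of_notMem _ hp := indicator_of_notMem hp φ
  abs_le_one p := by
    by_cases hp : p ∈ Ω
    · simpa only [indicator_of_mem hp] using h₁ p (subset_closure hp)
    · simp only [indicator_of_notMem hp, abs_zero, zero_le_one]

theorem dualFlatNorm_dipoleSum [FiniteDimensional ℝ E] {ι : Type*} (hΩ : IsOpen Ω) {x y : ι → E}
    (hx : ∀ i, x i ∈ closure Ω) (hy : ∀ i, y i ∈ closure Ω) :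
    dualFlatNorm Ω L (dipoleSum x y) =
      ⨆ f ∈ {f | IsFlatTest Ω L f}, ENNReal.ofReal (dipoleSum x y f) := by
  refine le_antisymm (iSup₂_le ?_) (iSup₂_le ?_)
  · rintro φ ⟨hφ, h₀, h₁⟩
    have heq : dipoleSum x y φ = dipoleSum x y (Ω.indicator φ) := by
      simp only [dipoleSum, indicator_eqOn_closure h₀ (hx _), indicator_eqOn_closure h₀ (hy _)]
    rw [heq]
    exact le_iSup₂_of_le (Ω.indicator φ) (isFlatTest_indicator hφ h₀ h₁) le_rfl
  · intro f hf
    refine le_iSup₂_of_le f ⟨hf.lipschitzWith.lipschitzOnWith, fun p hp => ?_,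
      fun p _ => hf.abs_le_one p⟩ le_rfl
    exact hf.eq_zero_of_notMem p (hΩ.frontier_eq ▸ hp).2

theorem enorm_sub_le_hausdorffMeasure_segment [MeasurableSpace E] [BorelSpace E] {f : E → ℝ}
    (hf : LipschitzWith L f) (h₀ : ∀ p ∉ Ω, f p = 0) (a b : E) :
    ‖f b - f a‖ₑ ≤ L * μH[1] (segment ℝ a b ∩ Ω) := by
  have hivt : segment ℝ (f a) (f b) ⊆ f '' segment ℝ a b := by
    rw [segment_eq_uIcc]
    exact (convex_segment a b).isPreconnected.image f hf.continuous.continuousOn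
      |>.ordConnected.uIcc_subset (mem_image_of_mem f (left_mem_segment ℝ a b))
        (mem_image_of_mem f (right_mem_segment ℝ a b))
  have hsplit : f '' segment ℝ a b ⊆ f '' (segment ℝ a b ∩ Ω) ∪ {0} := by
    rintro _ ⟨p, hp, rfl⟩
    by_cases hpΩ : p ∈ Ω
    · exact Or.inl (mem_image_of_mem f ⟨hp, hpΩ⟩)
    · exact Or.inr (h₀ p hpΩ)
  have hlip : μH[1] (f '' (segment ℝ a b ∩ Ω)) ≤ L * μH[1] (segment ℝ a b ∩ Ω) := by
    simpa only [ENNReal.rpow_one] using hf.hausdorffMeasure_image_le zero_le_one _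
  calc ‖f b - f a‖ₑ = μH[1] (segment ℝ (f a) (f b)) := by
        rw [hausdorffMeasure_segment, edist_comm, edist_eq_enorm_sub]
    _ ≤ μH[1] (f '' (segment ℝ a b ∩ Ω) ∪ {0}) := measure_mono (hivt.trans hsplit)
    _ ≤ μH[1] (f '' (segment ℝ a b ∩ Ω)) + μH[1] {0} := measure_union_le _ _
    _ ≤ L * μH[1] (segment ℝ a b ∩ Ω) := by
      have := Measure.nullSingletonClass_hausdorff ℝ one_pos
      rwa [measure_singleton, add_zero]

end FlatNorm

section Mollification

open scoped Convolution

variable {E : Type*} [NormedAddCommGroup E] [NormedSpace ℝ E]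

/-- The test functions `C_c^∞(E)`. -/
def IsTestFunction (φ : E → ℝ) : Prop :=
  ContDiff ℝ (⊤ : ℕ∞) φ ∧ HasCompactSupport φ

theorem exists_lipschitzWith_of_isTestFunction {φ : E → ℝ} (hφ : IsTestFunction φ) :
    ∃ K, LipschitzWith K φ :=
  hφ.1.lipschitzWith_of_hasCompactSupport hφ.2 (by simp)

variable [MeasurableSpace E] [BorelSpace E] [FiniteDimensional ℝ E] {K : ℝ≥0} {f : E → ℝ}

theorem lipschitzWith_normed_convolution (μ : Measure E) [μ.IsAddHaarMeasure]
    (η : ContDiffBump (0 : E)) (hf : LipschitzWith K f) :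
    LipschitzWith K (η.normed μ ⋆[ContinuousLinearMap.lsmul ℝ ℝ, μ] f) := by
  have hconv := η.hasCompactSupport_normed.convolutionExists_left_of_continuous_right
    (μ := μ) (ContinuousLinearMap.lsmul ℝ ℝ) (η.continuous_normed (μ := μ)).locallyIntegrable
    hf.continuous
  refine LipschitzWith.of_dist_le_mul fun p q => ?_
  have hpointwise (t : E) : ‖η.normed μ t * f (p - t) - η.normed μ t * f (q - t)‖ ≤
      η.normed μ t * (K * dist p q) := by
    have hdist := hf.dist_le_mul (p - t) (q - t)
    rw [dist_sub_right, dist_eq_norm] at hdist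
    rw [← mul_sub, norm_mul, Real.norm_of_nonneg (η.nonneg_normed t)]
    exact mul_le_mul_of_nonneg_left hdist (η.nonneg_normed t)
  calc dist ((η.normed μ ⋆[ContinuousLinearMap.lsmul ℝ ℝ, μ] f) p)
        ((η.normed μ ⋆[ContinuousLinearMap.lsmul ℝ ℝ, μ] f) q)
      = ‖∫ t, (η.normed μ t * f (p - t) - η.normed μ t * f (q - t)) ∂μ‖ := by
        rw [dist_eq_norm]
        exact congrArg norm (integral_sub (hconv p) (hconv q)).symm
    _ ≤ ∫ t, η.normed μ t * (K * dist p q) ∂μ :=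
        norm_integral_le_of_norm_le (η.integrable_normed.mul_const _) (ae_of_all _ hpointwise)
    _ = K * dist p q := by rw [integral_mul_const, η.integral_normed, one_mul]

theorem exists_seq_isTestFunction_lipschitzWith_tendsto (hf : LipschitzWith K f)
    (hc : HasCompactSupport f) :
    ∃ g : ℕ → E → ℝ, (∀ n, IsTestFunction (g n)) ∧ (∀ n, LipschitzWith K (g n)) ∧
      ∀ p, Tendsto (fun n => g n p) atTop (𝓝 (f p)) := by
  set μ : Measure E := Measure.addHaar
  let η (n : ℕ) : ContDiffBump (0 : E) :=
    ⟨1 / (2 * ((n : ℝ) + 1)), 1 / ((n : ℝ) + 1), by positivity,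
      one_div_lt_one_div_of_lt (by positivity) (lt_mul_of_one_lt_left (by positivity) one_lt_two)⟩
  have hη : Tendsto (fun n => (η n).rOut) atTop (𝓝 0) := tendsto_one_div_add_atTop_nhds_zero_nat
  refine ⟨fun n => (η n).normed μ ⋆[ContinuousLinearMap.lsmul ℝ ℝ, μ] f, fun n => ⟨?_, ?_⟩,
    fun n => lipschitzWith_normed_convolution μ (η n) hf,
    ContDiffBump.convolution_tendsto_right_of_continuous hη hf.continuous⟩
  · exact (η n).hasCompactSupport_normed.contDiff_convolution_left _
      ((η n).contDiff_normed (μ := μ)) hf.continuous.locallyIntegrable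
  · exact ((η n).hasCompactSupport_normed (μ := μ)).convolution _ hc

end Mollification

section Dipoles

variable {E ι : Type*} [PseudoMetricSpace E] {K : ℝ≥0} {f : E → ℝ} {x y : ι → E}

theorem norm_sub_le_of_lipschitzWith (hf : LipschitzWith K f) (p q : E) :
    ‖f p - f q‖ ≤ K * dist p q := by
  simpa only [dist_eq_norm] using hf.dist_le_mul p q

theorem summable_sub_of_lipschitzWith (hf : LipschitzWith K f)
    (hxy : Summable fun i => dist (x i) (y i)) : Summable fun i => f (x i) - f (y i) :=
  .of_norm_bounded (hxy.mul_left _) fun i => norm_sub_le_of_lipschitzWith hf (x i) (y i)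

theorem tendsto_dipoleSum {g : ℕ → E → ℝ} (hg : ∀ n, LipschitzWith K (g n))
    (hlim : ∀ p, Tendsto (fun n => g n p) atTop (𝓝 (f p)))
    (hxy : Summable fun i => dist (x i) (y i)) :
    Tendsto (fun n => dipoleSum x y (g n)) atTop (𝓝 (dipoleSum x y f)) :=
  tendsto_tsum_of_dominated_convergence (hxy.mul_left (K : ℝ)) (fun _ => (hlim _).sub (hlim _))
    (.of_forall fun n i => norm_sub_le_of_lipschitzWith (hg n) (x i) (y i))

theorem dipoleSum_sumElim {κ : Type*} {x' y' : κ → E} (hf : LipschitzWith K f)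
    (hxy : Summable fun i => dist (x i) (y i)) (hxy' : Summable fun k => dist (x' k) (y' k)) :
    dipoleSum (Sum.elim x x') (Sum.elim y y') f = dipoleSum x y f + dipoleSum x' y' f :=
  Summable.tsum_sum (summable_sub_of_lipschitzWith hf hxy) (summable_sub_of_lipschitzWith hf hxy')

end Dipoles

section AtomicMeasure

variable {E ι : Type*} [MeasurableSpace E] [Fintype ι]

/-- The atomic signed measure `∑ᵢ σᵢ δ_{zᵢ}`. -/
def atomicMeasure (σ : ι → ℤ) (z : ι → E) : SignedMeasure E :=
  ∑ i, σ i • (Measure.dirac (z i)).toSignedMeasure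

theorem atomicMeasure_sumElim {κ : Type*} [Fintype κ] (σ : ι → ℤ) (z : ι → E) (σ' : κ → ℤ)
    (z' : κ → E) :
    atomicMeasure (Sum.elim σ σ') (Sum.elim z z') = atomicMeasure σ z + atomicMeasure σ' z' := by
  simp only [atomicMeasure, Fintype.sum_sum_type, Sum.elim_inl, Sum.elim_inr]

theorem atomicMeasure_comp_equiv {κ : Type*} [Fintype κ] (e : κ ≃ ι) (σ : ι → ℤ) (z : ι → E) :
    atomicMeasure (σ ∘ e) (z ∘ e) = atomicMeasure σ z :=
  e.sum_comp fun i => σ i • (Measure.dirac (z i)).toSignedMeasure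

theorem atomicMeasure_neg (σ : ι → ℤ) (z : ι → E) :
    atomicMeasure (-σ) z = -atomicMeasure σ z := by
  simp only [atomicMeasure, Pi.neg_apply, neg_smul, Finset.sum_neg_distrib]

variable [MeasurableSingletonClass E]

theorem integral_atomicMeasure (σ : ι → ℤ) (z : ι → E) (f : E → ℝ) :
    ∫ᵛ p, f p ∂<•(atomicMeasure σ z) = ∑ i, (σ i : ℝ) * f (z i) := by
  have hint (i : ι) : (Measure.dirac (z i)).toSignedMeasure.Integrable f := by
    rw [VectorMeasure.Integrable, Measure.variation_toSignedMeasure]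
    exact integrable_dirac enorm_lt_top
  simp only [atomicMeasure, ← Int.cast_smul_eq_zsmul ℝ]
  rw [VectorMeasure.integral_finsetSum_vectorMeasure fun i _ => (hint i).smul_vectorMeasure _]
  simp only [VectorMeasure.integral_smul_vectorMeasure, VectorMeasure.integral_toSignedMeasure,
    integral_dirac, smul_eq_mul]

theorem enorm_sum_le_totalVariation_atomicMeasure {Ω : Set E} {f : E → ℝ}
    (h₀ : ∀ p ∉ Ω, f p = 0) (h₁ : ∀ p, |f p| ≤ 1) (σ : ι → ℤ) (z : ι → E) :
    ‖∑ i, (σ i : ℝ) * f (z i)‖ₑ ≤ (atomicMeasure σ z).totalVariation Ω := by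
  have hle (p : E) : ‖f p‖ₑ ≤ Ω.indicator 1 p := by
    by_cases hp : p ∈ Ω
    · simpa only [indicator_of_mem hp, Pi.one_apply, Real.enorm_eq_ofReal_abs,
        ENNReal.ofReal_le_one] using h₁ p
    · simp only [h₀ p hp, enorm_zero, zero_le]
  calc ‖∑ i, (σ i : ℝ) * f (z i)‖ₑ = ‖∫ᵛ p, f p ∂<•(atomicMeasure σ z)‖ₑ := by
        rw [integral_atomicMeasure]
    _ ≤ ∫⁻ p, ‖f p‖ₑ ∂(atomicMeasure σ z).totalVariation := by
        rw [SignedMeasure.totalVariation_eq_variation]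
        simpa only [VectorMeasure.variation_transpose_lsmul_flip] using
          VectorMeasure.enorm_integral_le_lintegral_enorm_transpose (μ := atomicMeasure σ z)
            (f := f) (B := (ContinuousLinearMap.lsmul ℝ ℝ).flip)
    _ ≤ ∫⁻ p, Ω.indicator 1 p ∂(atomicMeasure σ z).totalVariation := lintegral_mono hle
    _ ≤ (atomicMeasure σ z).totalVariation Ω := lintegral_indicator_one_le Ω

end AtomicMeasure

theorem map₂_extend_zero {α M κ κ' : Type*} [Zero α] [Zero M] (F : α → α → M) (hF : F 0 0 = 0)
    {e : κ → κ'} (he : e.Injective) (a b : κ → α) :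
    (fun k' => F (Function.extend e a 0 k') (Function.extend e b 0 k')) =
      Function.extend e (fun k => F (a k) (b k)) 0 := by
  funext k'
  by_cases hk : ∃ k, e k = k'
  · obtain ⟨k, rfl⟩ := hk
    simp only [he.extend_apply]
  · simp only [Function.extend_apply' _ _ _ hk, Pi.zero_apply, hF]

section Decomposition

variable {E : Type*} [NormedAddCommGroup E] [NormedSpace ℝ E] {Ω : Set E} {L : ℝ≥0}
  {Λ Λ₁ Λ₂ : (E → ℝ) → ℝ} {ι κ : Type*} [Fintype ι] {σ : ι → ℤ} {z : ι → E} {a b : κ → E}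
  {ι' κ' : Type*} [Fintype ι'] {σ' : ι' → ℤ} {z' : ι' → E} {a' b' : κ' → E}

/-- A decomposition `Λ = R + ∂S` on test functions, where `R = ∑ᵢ σᵢ δ_{zᵢ}` is a finite sum of
signed Dirac masses and `S` is a sum of oriented segments `[aₖ, bₖ]` of finite total length. -/
def IsDecomposition (Λ : (E → ℝ) → ℝ) (σ : ι → ℤ) (z : ι → E) (a b : κ → E) : Prop :=
  (∀ i, σ i = 1 ∨ σ i = -1) ∧ (Summable fun k => dist (a k) (b k)) ∧
    ∀ φ, IsTestFunction φ → Λ φ = ∑ i, (σ i : ℝ) * φ (z i) + dipoleSum b a φ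

theorem isDecomposition_extend_zero {e : κ → κ'} (he : e.Injective)
    (hdec : IsDecomposition Λ σ z a b) (r : ι' ≃ ι) :
    IsDecomposition Λ (σ ∘ r) (z ∘ r) (Function.extend e a 0) (Function.extend e b 0) := by
  obtain ⟨hσ, hab, hid⟩ := hdec
  refine ⟨fun i => hσ (r i), ?_, fun φ hφ => ?_⟩
  · rwa [map₂_extend_zero dist (dist_self _) he, summable_extend_zero he]
  · rw [hid φ hφ, dipoleSum, dipoleSum,
      map₂_extend_zero (fun p q => φ p - φ q) (sub_self _) he b a, tsum_extend_zero he,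
      ← r.sum_comp fun i => (σ i : ℝ) * φ (z i)]
    rfl

theorem isDecomposition_sumElim (h₁ : IsDecomposition Λ₁ σ z a b)
    (h₂ : IsDecomposition Λ₂ σ' z' a' b') (hΛ : ∀ φ, IsTestFunction φ → Λ φ = Λ₁ φ + Λ₂ φ) :
    IsDecomposition Λ (Sum.elim σ σ') (Sum.elim z z') (Sum.elim a a') (Sum.elim b b') := by
  obtain ⟨hσ, hab, hid⟩ := h₁
  obtain ⟨hσ', hab', hid'⟩ := h₂
  refine ⟨Sum.rec hσ hσ', hab.sum _ hab', fun φ hφ => ?_⟩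
  obtain ⟨K, hK⟩ := exists_lipschitzWith_of_isTestFunction hφ
  simp only [dist_comm (a _)] at hab
  simp only [dist_comm (a' _)] at hab'
  rw [hΛ φ hφ, hid φ hφ, hid' φ hφ, dipoleSum_sumElim hK hab hab', Fintype.sum_sum_type]
  simp only [Sum.elim_inl, Sum.elim_inr]
  ring

variable [MeasurableSpace E] [BorelSpace E]

/-- The cost `|R|(Ω) + L ∑ₖ H¹([aₖ, bₖ] ∩ Ω)` of a decomposition. -/
def decompositionCost (Ω : Set E) (L : ℝ≥0) (σ : ι → ℤ) (z : ι → E) (a b : κ → E) : ℝ≥0∞ :=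
  (atomicMeasure σ z).totalVariation Ω + L * ∑' k, μH[1] (segment ℝ (a k) (b k) ∩ Ω)

/-- The least cost of a decomposition of `Λ` into finitely many atoms and a sequence of segments. -/
def decompositionInf (Ω : Set E) (L : ℝ≥0) (Λ : (E → ℝ) → ℝ) : ℝ≥0∞ :=
  sInf {c | ∃ (m : ℕ) (σ : Fin m → ℤ) (z : Fin m → E) (a b : ℕ → E),
    IsDecomposition Λ σ z a b ∧ c = decompositionCost Ω L σ z a b}

section LowerBound

variable {ν : Type*} {x y : ν → E} [FiniteDimensional ℝ E]

theorem dipoleSum_eq_of_isDecomposition (hxy : Summable fun i => dist (x i) (y i))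
    (hdec : IsDecomposition (dipoleSum x y) σ z a b) {f : E → ℝ} (hf : LipschitzWith L f)
    (hc : HasCompactSupport f) :
    dipoleSum x y f = ∑ i, (σ i : ℝ) * f (z i) + dipoleSum b a f := by
  obtain ⟨g, hg, hgL, hlim⟩ := exists_seq_isTestFunction_lipschitzWith_tendsto hf hc
  obtain ⟨-, hab, hid⟩ := hdec
  simp only [dist_comm (a _)] at hab
  have hatoms : Tendsto (fun n => ∑ i, (σ i : ℝ) * g n (z i)) atTop
      (𝓝 (∑ i, (σ i : ℝ) * f (z i))) :=
    tendsto_finsetSum _ fun i _ => (hlim (z i)).const_mul _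
  refine tendsto_nhds_unique (tendsto_dipoleSum hgL hlim hxy) ?_
  simpa only [hid _ (hg _)] using hatoms.add (tendsto_dipoleSum hgL hlim hab)

theorem ofReal_dipoleSum_le_decompositionCost (hΩ : Bornology.IsBounded Ω)
    (hxy : Summable fun i => dist (x i) (y i))
    (hdec : IsDecomposition (dipoleSum x y) σ z a b) {f : E → ℝ} (hf : IsFlatTest Ω L f) :
    ENNReal.ofReal (dipoleSum x y f) ≤ decompositionCost Ω L σ z a b := by
  have hc : HasCompactSupport f :=
    .intro hΩ.isCompact_closure fun p hp => hf.eq_zero_of_notMem p fun h => hp (subset_closure h)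
  have hsegments : ‖dipoleSum b a f‖ₑ ≤ L * ∑' k, μH[1] (segment ℝ (a k) (b k) ∩ Ω) := by
    rw [← ENNReal.tsum_mul_left]
    exact enorm_tsum_le_tsum_enorm.trans (ENNReal.tsum_le_tsum fun k =>
      enorm_sub_le_hausdorffMeasure_segment hf.lipschitzWith hf.eq_zero_of_notMem (a k) (b k))
  calc ENNReal.ofReal (dipoleSum x y f) ≤ ‖dipoleSum x y f‖ₑ := Real.ofReal_le_enorm _
    _ ≤ ‖∑ i, (σ i : ℝ) * f (z i)‖ₑ + ‖dipoleSum b a f‖ₑ := by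
        rw [dipoleSum_eq_of_isDecomposition hxy hdec hf.lipschitzWith hc]
        exact enorm_add_le _ _
    _ ≤ decompositionCost Ω L σ z a b :=
        add_le_add (enorm_sum_le_totalVariation_atomicMeasure hf.eq_zero_of_notMem
          hf.abs_le_one σ z) hsegments

theorem dualFlatNorm_le_decompositionInf (hΩo : IsOpen Ω) (hΩb : Bornology.IsBounded Ω)
    (hx : ∀ i, x i ∈ closure Ω) (hy : ∀ i, y i ∈ closure Ω)
    (hxy : Summable fun i => dist (x i) (y i)) :
    dualFlatNorm Ω L (dipoleSum x y) ≤ decompositionInf Ω L (dipoleSum x y) := by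
  rw [dualFlatNorm_dipoleSum hΩo hx hy]
  refine iSup₂_le fun f hf => le_sInf ?_
  rintro _ ⟨m, σ, z, a, b, hdec, rfl⟩
  exact ofReal_dipoleSum_le_decompositionCost hΩb hxy hdec hf

end LowerBound

section UpperBound

theorem decompositionCost_extend_zero {e : κ → κ'} (he : e.Injective) (r : ι' ≃ ι) :
    decompositionCost Ω L (σ ∘ r) (z ∘ r) (Function.extend e a 0) (Function.extend e b 0) =
      decompositionCost Ω L σ z a b := by
  have hzero : μH[1] (segment ℝ (0 : E) 0 ∩ Ω) = 0 :=
    measure_mono_null inter_subset_left (by rw [hausdorffMeasure_segment, edist_self])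
  rw [decompositionCost, decompositionCost, atomicMeasure_comp_equiv,
    map₂_extend_zero (fun p q => μH[1] (segment ℝ p q ∩ Ω)) hzero he, tsum_extend_zero he]

theorem decompositionInf_le_decompositionCost [Countable κ] (hdec : IsDecomposition Λ σ z a b) :
    decompositionInf Ω L Λ ≤ decompositionCost Ω L σ z a b := by
  obtain ⟨e, he⟩ := Countable.exists_injective_nat κ
  rw [← decompositionCost_extend_zero he (Fintype.equivFin ι).symm]
  exact sInf_le ⟨_, _, _, _, _, isDecomposition_extend_zero he hdec _, rfl⟩

theorem decompositionCost_sumElim_le :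
    decompositionCost Ω L (Sum.elim σ σ') (Sum.elim z z') (Sum.elim a a') (Sum.elim b b') ≤
      decompositionCost Ω L σ z a b + decompositionCost Ω L σ' z' a' b' := by
  have htv : (atomicMeasure (Sum.elim σ σ') (Sum.elim z z')).totalVariation Ω ≤
      (atomicMeasure σ z).totalVariation Ω + (atomicMeasure σ' z').totalVariation Ω := by
    simp only [atomicMeasure_sumElim, SignedMeasure.totalVariation_eq_variation]
    exact VectorMeasure.variation_add_le Ω
  simp only [decompositionCost]
  rw [Summable.tsum_sum ENNReal.summable ENNReal.summable, mul_add, add_add_add_comm]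
  exact add_le_add_left htv _

theorem decompositionInf_le_add (hΛ : ∀ φ, IsTestFunction φ → Λ φ = Λ₁ φ + Λ₂ φ) :
    decompositionInf Ω L Λ ≤ decompositionInf Ω L Λ₁ + decompositionInf Ω L Λ₂ := by
  rw [decompositionInf.eq_1 Ω L Λ₁, ENNReal.sInf_add]
  refine le_iInf₂ ?_
  rintro _ ⟨m₁, σ₁, z₁, a₁, b₁, h₁, rfl⟩
  rw [add_comm, decompositionInf.eq_1 Ω L Λ₂, ENNReal.sInf_add]
  refine le_iInf₂ ?_
  rintro _ ⟨m₂, σ₂, z₂, a₂, b₂, h₂, rfl⟩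
  rw [add_comm]
  exact (decompositionInf_le_decompositionCost (isDecomposition_sumElim h₁ h₂ hΛ)).trans
    decompositionCost_sumElim_le

theorem decompositionInf_neg_le : decompositionInf Ω L (-Λ) ≤ decompositionInf Ω L Λ := by
  refine le_sInf ?_
  rintro _ ⟨m, σ, z, a, b, ⟨hσ, hab, hid⟩, rfl⟩
  refine sInf_le ⟨m, -σ, z, b, a, ⟨fun i => ?_, ?_, fun φ hφ => ?_⟩, ?_⟩
  · simpa only [Pi.neg_apply, neg_inj, neg_eq_iff_eq_neg, neg_neg] using (hσ i).symm
  · simpa only [dist_comm] using hab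
  · simp only [Pi.neg_apply, hid φ hφ, dipoleSum, neg_add, ← tsum_neg, ← Finset.sum_neg_distrib,
      neg_sub, Int.cast_neg, neg_mul]
  · simp only [decompositionCost, atomicMeasure_neg, SignedMeasure.totalVariation_neg,
      segment_symm ℝ (b _)]

theorem decompositionInf_dipoleSum_le [Countable κ] {x y : κ → E}
    (hxy : Summable fun k => dist (x k) (y k)) :
    decompositionInf Ω L (dipoleSum x y) ≤ ENNReal.ofReal (L * ∑' k, dist (x k) (y k)) := by
  have hdec : IsDecomposition (dipoleSum x y) ![] ![] y x :=
    ⟨isEmptyElim, by simpa only [dist_comm] using hxy, fun φ _ => by simp⟩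
  refine (decompositionInf_le_decompositionCost hdec).trans ?_
  have hsegment (k : κ) : μH[1] (segment ℝ (y k) (x k) ∩ Ω) ≤ ENNReal.ofReal (dist (x k) (y k)) :=
    calc μH[1] (segment ℝ (y k) (x k) ∩ Ω) ≤ μH[1] (segment ℝ (y k) (x k)) :=
          measure_mono inter_subset_left
      _ = ENNReal.ofReal (dist (x k) (y k)) := by
          rw [hausdorffMeasure_segment, edist_comm, edist_dist]
  rw [ENNReal.ofReal_mul L.coe_nonneg, ENNReal.ofReal_coe_nnreal,
    ENNReal.ofReal_tsum_of_nonneg (fun _ => dist_nonneg) hxy]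
  have hzero : (atomicMeasure ![] (![] : Fin 0 → E)).totalVariation Ω = 0 := by
    simp only [atomicMeasure, Finset.univ_eq_empty, Finset.sum_empty,
      SignedMeasure.totalVariation_zero, Measure.coe_zero, Pi.zero_apply]
  rw [decompositionCost, hzero, zero_add]
  gcongr with k
  exact hsegment k

theorem decompositionInf_eval_le (p : E) :
    decompositionInf Ω L (fun φ => φ p) ≤ Ω.indicator 1 p := by
  have hdec : IsDecomposition (fun φ => φ p) (fun _ : Unit => 1) (fun _ => p)
      (isEmptyElim : Empty → E) isEmptyElim :=
    ⟨fun _ => .inl rfl, .of_finite, fun φ _ => by simp [dipoleSum]⟩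
  refine (decompositionInf_le_decompositionCost hdec).trans_eq ?_
  calc decompositionCost Ω L _ _ _ _ = Measure.dirac p Ω := by
        simp [decompositionCost, atomicMeasure, SignedMeasure.totalVariation_eq_variation]
    _ = Ω.indicator 1 p := Measure.dirac_apply p Ω

theorem decompositionInf_dipole_le (p q : E) :
    decompositionInf Ω L (fun φ => φ p - φ q) ≤ ENNReal.ofReal (L * dist p q) := by
  have hdipole : (fun φ : E → ℝ => φ p - φ q) = dipoleSum (fun _ : Unit => p) fun _ => q :=
    funext fun φ => by simp only [dipoleSum, tsum_fintype, Fintype.sum_unique]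
  simpa only [hdipole, tsum_fintype, Fintype.sum_unique] using
    decompositionInf_dipoleSum_le (Ω := Ω) (L := L) (x := fun _ : Unit => p) (y := fun _ => q)
      .of_finite

theorem decompositionInf_sum_le {ν : Type*} (s : Finset ν) (Φ : ν → (E → ℝ) → ℝ) :
    decompositionInf Ω L (∑ i ∈ s, Φ i) ≤ ∑ i ∈ s, decompositionInf Ω L (Φ i) := by
  have hzero : decompositionInf Ω L (0 : (E → ℝ) → ℝ) ≤ 0 := by
    simpa only [sub_self, dist_self, mul_zero, ENNReal.ofReal_zero, Pi.zero_def] using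
      decompositionInf_dipole_le (Ω := Ω) (L := L) (0 : E) 0
  exact Finset.le_sum_of_subadditive _ hzero
    (fun _ _ => decompositionInf_le_add fun _ _ => rfl) s Φ

end UpperBound

end Decomposition

section BoundaryCost

variable {E : Type*} [PseudoMetricSpace E] {Ω : Set E} {L : ℝ≥0} {p q r : E}

/-- The cost `min {1, L dist(p, Ωᶜ)}` of a Dirac mass at `p`: it is either paid for as an atom or
connected to the complement of `Ω` by a segment. -/
def boundaryCost (Ω : Set E) (L : ℝ≥0) (p : E) : ℝ :=
  min 1 (L * infDist p Ωᶜ)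

/-- The cost of the dipole `δ_p - δ_q`: its two poles are either connected to each other by a
segment or paid for separately. -/
def dipoleCost (Ω : Set E) (L : ℝ≥0) (p q : E) : ℝ :=
  min (L * dist p q) (boundaryCost Ω L p + boundaryCost Ω L q)

theorem boundaryCost_nonneg : 0 ≤ boundaryCost Ω L p :=
  le_min zero_le_one (mul_nonneg L.coe_nonneg infDist_nonneg)

theorem boundaryCost_eq_zero_of_notMem (hp : p ∉ Ω) : boundaryCost Ω L p = 0 := by
  rw [boundaryCost, infDist_zero_of_mem (mem_compl hp), mul_zero, min_eq_right zero_le_one]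

theorem boundaryCost_le_add_mul_dist :
    boundaryCost Ω L p ≤ boundaryCost Ω L q + L * dist p q := by
  have hinf : L * infDist p Ωᶜ ≤ L * infDist q Ωᶜ + L * dist p q := by
    rw [← mul_add]
    gcongr
    exact infDist_le_infDist_add_dist
  have hdist : 0 ≤ L * dist p q := by positivity
  rw [boundaryCost, boundaryCost, min_add]
  exact min_le_min (le_add_of_nonneg_right hdist) hinf

theorem dipoleCost_nonneg : 0 ≤ dipoleCost Ω L p q :=
  le_min (by positivity) (add_nonneg boundaryCost_nonneg boundaryCost_nonneg)

theorem dipoleCost_comm : dipoleCost Ω L p q = dipoleCost Ω L q p := by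
  rw [dipoleCost, dipoleCost, dist_comm, add_comm]

theorem dipoleCost_self : dipoleCost Ω L p p = 0 := by
  rw [dipoleCost, dist_self, mul_zero]
  exact min_eq_left (add_nonneg boundaryCost_nonneg boundaryCost_nonneg)

theorem dipoleCost_le_boundaryCost_of_notMem (hq : q ∉ Ω) :
    dipoleCost Ω L p q ≤ boundaryCost Ω L p :=
  (min_le_right _ _).trans_eq (by rw [boundaryCost_eq_zero_of_notMem hq, add_zero])

theorem dipoleCost_triangle : dipoleCost Ω L p r ≤ dipoleCost Ω L p q + dipoleCost Ω L q r := by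
  have hdist : L * dist p r ≤ L * dist p q + L * dist q r := by
    rw [← mul_add]
    gcongr
    exact dist_triangle p q r
  have hpq : boundaryCost Ω L p ≤ boundaryCost Ω L q + L * dist p q := boundaryCost_le_add_mul_dist
  have hrq : boundaryCost Ω L r ≤ boundaryCost Ω L q + L * dist q r :=
    dist_comm r q ▸ boundaryCost_le_add_mul_dist
  have hq : 0 ≤ boundaryCost Ω L q := boundaryCost_nonneg
  rw [dipoleCost, dipoleCost, dipoleCost, min_add, add_min, add_min]
  refine le_min (le_min ?_ ?_) (le_min ?_ ?_)
  · exact min_le_of_left_le hdist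
  all_goals exact min_le_of_right_le (by linarith)

theorem isFlatTest_of_isPotential_dipoleCost {φ : E → ℝ} (hφ : IsPotential (dipoleCost Ω L) φ)
    {p₀ : E} (hp₀ : p₀ ∉ Ω) (h₀ : φ p₀ = 0) : IsFlatTest Ω L φ := by
  have habs (p q : E) : |φ p - φ q| ≤ dipoleCost Ω L p q :=
    abs_sub_le_iff.2 ⟨hφ p q, (hφ q p).trans_eq dipoleCost_comm⟩
  have hbound (p : E) : |φ p| ≤ boundaryCost Ω L p := by
    simpa only [h₀, sub_zero] using (habs p p₀).trans (dipoleCost_le_boundaryCost_of_notMem hp₀)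
  refine ⟨.of_dist_le_mul fun p q => (habs p q).trans (min_le_left _ _), fun p hp => ?_,
    fun p => (hbound p).trans (min_le_left _ _)⟩
  exact abs_nonpos_iff.1 ((hbound p).trans_eq (boundaryCost_eq_zero_of_notMem hp))

end BoundaryCost

section StrongDuality

variable {E : Type*} [NormedAddCommGroup E] [NormedSpace ℝ E] [FiniteDimensional ℝ E]
  [MeasurableSpace E] [BorelSpace E] {Ω : Set E} {L : ℝ≥0}

theorem decompositionInf_eval_le_boundaryCost (hΩ : IsOpen Ω) (hne : Ωᶜ.Nonempty) (p : E) :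
    decompositionInf Ω L (fun φ => φ p) ≤ ENNReal.ofReal (boundaryCost Ω L p) := by
  rw [boundaryCost, ENNReal.ofReal_min, ENNReal.ofReal_one]
  refine le_min ((decompositionInf_eval_le p).trans (indicator_le (fun _ _ => le_rfl) p)) ?_
  obtain ⟨q, hq, hpq⟩ := hΩ.isClosed_compl.exists_infDist_eq_dist hne p
  calc decompositionInf Ω L (fun φ => φ p)
      ≤ decompositionInf Ω L (fun φ => φ q) + decompositionInf Ω L (fun φ => φ p - φ q) :=
        decompositionInf_le_add fun φ _ => (add_sub_cancel (φ q) (φ p)).symm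
    _ ≤ 0 + ENNReal.ofReal (L * dist p q) :=
        add_le_add ((decompositionInf_eval_le q).trans_eq (indicator_of_notMem hq _))
          (decompositionInf_dipole_le p q)
    _ = ENNReal.ofReal (L * infDist p Ωᶜ) := by rw [zero_add, hpq]

theorem decompositionInf_dipole_le_dipoleCost (hΩ : IsOpen Ω) (hne : Ωᶜ.Nonempty) (p q : E) :
    decompositionInf Ω L (fun φ => φ p - φ q) ≤ ENNReal.ofReal (dipoleCost Ω L p q) := by
  rw [dipoleCost, ENNReal.ofReal_min, ENNReal.ofReal_add boundaryCost_nonneg boundaryCost_nonneg]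
  refine le_min (decompositionInf_dipole_le p q) ?_
  calc decompositionInf Ω L (fun φ => φ p - φ q)
      ≤ decompositionInf Ω L (fun φ => φ p) + decompositionInf Ω L (-fun φ => φ q) :=
        decompositionInf_le_add fun φ _ => sub_eq_add_neg (φ p) (φ q)
    _ ≤ _ := add_le_add (decompositionInf_eval_le_boundaryCost hΩ hne p)
        (decompositionInf_neg_le.trans (decompositionInf_eval_le_boundaryCost hΩ hne q))

variable {ν : Type*} {x y : ν → E}

theorem exists_isFlatTest_decompositionInf_dipoleSum_le [Finite ν] (hΩ : IsOpen Ω)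
    (hne : Ωᶜ.Nonempty) (x y : ν → E) :
    ∃ f, IsFlatTest Ω L f ∧
      decompositionInf Ω L (dipoleSum x y) ≤ ENNReal.ofReal (dipoleSum x y f) := by
  cases nonempty_fintype ν
  obtain ⟨p₀, hp₀⟩ := hne
  obtain ⟨f, hf, hf₀, τ, hτ⟩ := exists_isPotential_perm_eq (D := dipoleCost Ω L)
    (fun _ => dipoleCost_self) (fun _ _ _ => dipoleCost_triangle) x y p₀
  have hmatch (φ : E → ℝ) : dipoleSum x y φ = ∑ i, (φ (x i) - φ (y (τ i))) := by
    simp only [dipoleSum, tsum_fintype, Finset.sum_sub_distrib, Equiv.sum_comp τ fun i => φ (y i)]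
  refine ⟨f, isFlatTest_of_isPotential_dipoleCost hf hp₀ hf₀, ?_⟩
  calc decompositionInf Ω L (dipoleSum x y)
      = decompositionInf Ω L (∑ i, fun φ => φ (x i) - φ (y (τ i))) :=
        congrArg _ (funext fun φ => by rw [hmatch, Finset.sum_apply])
    _ ≤ ∑ i, ENNReal.ofReal (dipoleCost Ω L (x i) (y (τ i))) :=
        (decompositionInf_sum_le _ _).trans
          (Finset.sum_le_sum fun i _ => decompositionInf_dipole_le_dipoleCost hΩ ⟨p₀, hp₀⟩ _ _)
    _ = ENNReal.ofReal (dipoleSum x y f) := by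
        rw [← ENNReal.ofReal_sum_of_nonneg fun _ _ => dipoleCost_nonneg, hmatch]
        simp only [hτ]

theorem decompositionInf_dipoleSum_le_dualFlatNorm_add_tail [Countable ν] (hΩ : IsOpen Ω)
    (hne : Ωᶜ.Nonempty) (hx : ∀ i, x i ∈ closure Ω) (hy : ∀ i, y i ∈ closure Ω)
    (hxy : Summable fun i => dist (x i) (y i)) (s : Finset ν) :
    decompositionInf Ω L (dipoleSum x y) ≤ dualFlatNorm Ω L (dipoleSum x y) +
      2 * ENNReal.ofReal (L * ∑' i : {i // i ∉ s}, dist (x i) (y i)) := by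
  set head : (E → ℝ) → ℝ := dipoleSum (fun i : s => x i) fun i => y i
  set tail : (E → ℝ) → ℝ := dipoleSum (fun i : {i // i ∉ s} => x i) fun i => y i
  set ε : ℝ := L * ∑' i : {i // i ∉ s}, dist (x i) (y i)
  have htail : Summable fun i : {i // i ∉ s} => dist (x i) (y i) := hxy.subtype _
  have hsplit {K : ℝ≥0} {f : E → ℝ} (hf : LipschitzWith K f) :
      dipoleSum x y f = head f + tail f := by
    rw [dipoleSum, ← (summable_sub_of_lipschitzWith hf hxy).sum_add_tsum_subtype_compl s,
      ← Finset.sum_coe_sort, ← tsum_fintype (L := .unconditional _)]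
    rfl
  obtain ⟨f, hf, hhead⟩ := exists_isFlatTest_decompositionInf_dipoleSum_le (L := L) hΩ hne
    (fun i : s => x i) fun i => y i
  have htail_le : |tail f| ≤ ε := by
    refine (tsum_of_norm_bounded (htail.hasSum.mul_left _) fun i => ?_ : ‖tail f‖ ≤ ε)
    exact norm_sub_le_of_lipschitzWith hf.lipschitzWith _ _
  have hhead_le : head f ≤ dipoleSum x y f + ε := by
    rw [hsplit hf.lipschitzWith]
    linarith [neg_le_of_abs_le htail_le]
  have hf_le : ENNReal.ofReal (dipoleSum x y f) ≤ dualFlatNorm Ω L (dipoleSum x y) := by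
    rw [dualFlatNorm_dipoleSum hΩ hx hy]
    exact le_iSup₂_of_le f hf le_rfl
  calc decompositionInf Ω L (dipoleSum x y)
      ≤ decompositionInf Ω L head + decompositionInf Ω L tail :=
        decompositionInf_le_add fun φ hφ =>
          hsplit (exists_lipschitzWith_of_isTestFunction hφ).choose_spec
    _ ≤ ENNReal.ofReal (head f) + ENNReal.ofReal ε :=
        add_le_add hhead (decompositionInf_dipoleSum_le htail)
    _ ≤ ENNReal.ofReal (dipoleSum x y f) + ENNReal.ofReal ε + ENNReal.ofReal ε := by
        gcongr
        exact (ENNReal.ofReal_le_ofReal hhead_le).trans ENNReal.ofReal_add_le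
    _ ≤ dualFlatNorm Ω L (dipoleSum x y) + 2 * ENNReal.ofReal ε := by
        rw [add_assoc, ← two_mul]
        gcongr

theorem decompositionInf_dipoleSum_le_dualFlatNorm [Countable ν] (hΩ : IsOpen Ω)
    (hne : Ωᶜ.Nonempty) (hx : ∀ i, x i ∈ closure Ω) (hy : ∀ i, y i ∈ closure Ω)
    (hxy : Summable fun i => dist (x i) (y i)) :
    decompositionInf Ω L (dipoleSum x y) ≤ dualFlatNorm Ω L (dipoleSum x y) := by
  have htails : Tendsto (fun s : Finset ν => dualFlatNorm Ω L (dipoleSum x y) +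
      2 * ENNReal.ofReal (L * ∑' i : {i // i ∉ s}, dist (x i) (y i))) atTop
      (𝓝 (dualFlatNorm Ω L (dipoleSum x y))) := by
    have h := ENNReal.tendsto_ofReal
      ((tendsto_tsum_compl_atTop_zero fun i => dist (x i) (y i)).const_mul (L : ℝ))
    simpa only [mul_zero, ENNReal.ofReal_zero, add_zero] using
      (ENNReal.Tendsto.const_mul h (.inr ENNReal.ofNat_ne_top)).const_add
        (dualFlatNorm Ω L (dipoleSum x y))
  exact ge_of_tendsto' htails
    (decompositionInf_dipoleSum_le_dualFlatNorm_add_tail hΩ hne hx hy hxy)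

theorem flatNorm_eq_inf_decompositions_general [Nontrivial E] [Countable ν] (hΩo : IsOpen Ω)
    (hΩb : Bornology.IsBounded Ω) (L : ℝ≥0) (hx : ∀ i, x i ∈ closure Ω)
    (hy : ∀ i, y i ∈ closure Ω) (hxy : Summable fun i => dist (x i) (y i)) :
    dualFlatNorm Ω L (dipoleSum x y) = decompositionInf Ω L (dipoleSum x y) := by
  have hne : Ωᶜ.Nonempty :=
    nonempty_compl.2 fun h => NormedSpace.unbounded_univ ℝ E (h ▸ hΩb)
  exact (dualFlatNorm_le_decompositionInf hΩo hΩb hx hy hxy).antisymm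
    (decompositionInf_dipoleSum_le_dualFlatNorm hΩo hne hx hy hxy)

end StrongDuality

/-- **Corollary 3.3 (`‖·‖_{flat,α}` as an infimum over `ℛ_f × 𝒮`).** For
`Λ = Σ (δ_{x_i} − δ_{y_i})` with property `(P)`, the flat norm `‖Λ‖_{flat,α}` equals
the infimum of `|R|(Ω) + 2 Σ_k H¹([a_k,b_k] ∩ Ω)` over all decompositions
`Λ = R + ∂S` with `R` a finite sum of signed Dirac masses and `S` a countable sum of
oriented segments of finite total length. -/
theorem flatNorm_eq_inf_decompositions (Ω : Set R2) (hΩo : IsOpen Ω)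
    (hΩb : Bornology.IsBounded Ω) (hΩc : IsConnected Ω) (hΩl : HasLipschitzBoundary Ω)
    (x y : ℕ → R2)
    (hmem : ∀ i, x i ∈ closure Ω ∧ y i ∈ closure Ω ∧ x i ≠ y i ∧ (x i ∈ Ω ∨ y i ∈ Ω))
    (hsum : Summable fun i => dist (x i) (y i))
    (heq : ∀ i, dist (x i) (y i) = dbar Ω (x i) (y i)) :
    flatNorm Ω 2 (fun φ => ∑' i, (φ (x i) - φ (y i))) =
      sInf { c : ℝ≥0∞ | ∃ (m : ℕ) (σ : Fin m → ℤ) (z : Fin m → R2) (a b : ℕ → R2),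
        (∀ i, σ i = 1 ∨ σ i = -1) ∧
        Summable (fun k => dist (a k) (b k)) ∧
        (∀ φ : R2 → ℝ, ContDiff ℝ (⊤ : ℕ∞) φ → HasCompactSupport φ →
          ∑' i, (φ (x i) - φ (y i)) =
            (∑ i, (σ i : ℝ) * φ (z i)) + ∑' k, (φ (b k) - φ (a k))) ∧
        c = (∑ i, (σ i) • ((MeasureTheory.Measure.dirac (z i)).toSignedMeasure :
                MeasureTheory.SignedMeasure R2)).totalVariation Ω +
            2 * ∑' k, μH[1] (segment ℝ (a k) (b k) ∩ Ω) } := by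
  have h := flatNorm_eq_inf_decompositions_general hΩo hΩb 2 (fun i => (hmem i).1)
    (fun i => (hmem i).2.1) hsum
  simp only [decompositionInf, IsDecomposition, decompositionCost, IsTestFunction, and_imp,
    and_assoc, ENNReal.coe_ofNat] at h
  exact h
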